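/- Let σ1, σ2 : ℂ, assume Q is symmetric, and assume G(σ1), G(σ2), G(σ1+σ2), Wᵀ * G(σ1) * V, Wᵀ * G(σ2) * V and Wᵀ * G(σ1+σ2) * V are invertible. If x1(σ1), x1(σ2), x2(σ1, σ2) lie in the column span of V and y1(σ1+σ2), y2(σ2, σ1) lie in the column span of W, then the reduced model matches the second partial derivative of the second-order transfer function: deriv (fun s => H2(σ1, s)) σ2 = deriv (fun s => Ĥ2(σ1, s)) σ2. -/

import Mathlib

open Matrix
open scoped Kronecker

noncomputable section

/-- Kronecker product of vectors: `(u ⊗ v) (l, j) = u l * v j`. -/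
def vkron {n : ℕ} (u v : Fin n → ℂ) : Fin n × Fin n → ℂ :=
  fun p => u p.1 * v p.2

/-- The matrix pencil `G(s) = s • E - A`. -/
def Gm {n : ℕ} (E A : Matrix (Fin n) (Fin n) ℂ) (s : ℂ) : Matrix (Fin n) (Fin n) ℂ :=
  s • E - A

/-- Primal state of the first subsystem: `x1(s) = G(s)⁻¹ *ᵥ B`. -/
def x1 {n : ℕ} (E A : Matrix (Fin n) (Fin n) ℂ) (B : Fin n → ℂ) (s : ℂ) : Fin n → ℂ :=
  (Gm E A s)⁻¹ *ᵥ B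

/-- First-order transfer function `H1(s) = C ⬝ᵥ x1(s)`. -/
def H1 {n : ℕ} (E A : Matrix (Fin n) (Fin n) ℂ) (B C : Fin n → ℂ) (s : ℂ) : ℂ :=
  C ⬝ᵥ x1 E A B s

/-- Second-order input term `B₂(s1, s2)`. -/
def B2 {n : ℕ} (E A N : Matrix (Fin n) (Fin n) ℂ) (Q : Matrix (Fin n) (Fin n × Fin n) ℂ)
    (B : Fin n → ℂ) (s1 s2 : ℂ) : Fin n → ℂ :=
  Q *ᵥ vkron (x1 E A B s1) (x1 E A B s2) + (1/2 : ℂ) • (N *ᵥ (x1 E A B s1 + x1 E A B s2))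

/-- Primal state of the second subsystem: `x2(s1, s2) = G(s1+s2)⁻¹ *ᵥ B₂(s1, s2)`. -/
def x2 {n : ℕ} (E A N : Matrix (Fin n) (Fin n) ℂ) (Q : Matrix (Fin n) (Fin n × Fin n) ℂ)
    (B : Fin n → ℂ) (s1 s2 : ℂ) : Fin n → ℂ :=
  (Gm E A (s1 + s2))⁻¹ *ᵥ B2 E A N Q B s1 s2

/-- Second-order (symmetric) transfer function `H2(s1, s2) = C ⬝ᵥ x2(s1, s2)`. -/
def H2 {n : ℕ} (E A N : Matrix (Fin n) (Fin n) ℂ) (Q : Matrix (Fin n) (Fin n × Fin n) ℂ)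
    (B C : Fin n → ℂ) (s1 s2 : ℂ) : ℂ :=
  C ⬝ᵥ x2 E A N Q B s1 s2

/-- Dual state of the first subsystem: `y1(s) = (G(s)ᵀ)⁻¹ *ᵥ C`. -/
def y1 {n : ℕ} (E A : Matrix (Fin n) (Fin n) ℂ) (C : Fin n → ℂ) (s : ℂ) : Fin n → ℂ :=
  ((Gm E A s)ᵀ)⁻¹ *ᵥ C

/-- Mode-2 matricization: `Q⁽²⁾ j (l, i) = Q i (l, j)`. -/
def mode2 {n : ℕ} (Q : Matrix (Fin n) (Fin n × Fin n) ℂ) : Matrix (Fin n) (Fin n × Fin n) ℂ :=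
  fun j p => Q p.2 (p.1, j)

/-- Dual output term `C₂(s1, s2)`. -/
def C2 {n : ℕ} (E A N : Matrix (Fin n) (Fin n) ℂ) (Q : Matrix (Fin n) (Fin n × Fin n) ℂ)
    (B C : Fin n → ℂ) (s1 s2 : ℂ) : Fin n → ℂ :=
  mode2 Q *ᵥ vkron (x1 E A B s2) (y1 E A C (s1 + s2)) +
    (1/2 : ℂ) • (Nᵀ *ᵥ y1 E A C (s1 + s2))

/-- Dual state of the second subsystem: `y2(s1, s2) = (G(s1)ᵀ)⁻¹ *ᵥ C₂(s1, s2)`. -/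
def y2 {n : ℕ} (E A N : Matrix (Fin n) (Fin n) ℂ) (Q : Matrix (Fin n) (Fin n × Fin n) ℂ)
    (B C : Fin n → ℂ) (s1 s2 : ℂ) : Fin n → ℂ :=
  ((Gm E A s1)ᵀ)⁻¹ *ᵥ C2 E A N Q B C s1 s2

/-- `Q` is symmetric: `Q *ᵥ (u ⊗ v) = Q *ᵥ (v ⊗ u)` for all `u, v`. -/
def QSymm {n : ℕ} (Q : Matrix (Fin n) (Fin n × Fin n) ℂ) : Prop :=
  ∀ u v : Fin n → ℂ, Q *ᵥ vkron u v = Q *ᵥ vkron v u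

/-- Euclidean (ℓ²) norm of a vector in `Fin n → ℂ`. -/
def vnorm {n : ℕ} (v : Fin n → ℂ) : ℝ := ‖(WithLp.equiv 2 (Fin n → ℂ)).symm v‖

/-- ℓ²-induced operator norm of a square complex matrix. -/
def mnorm {n : ℕ} (M : Matrix (Fin n) (Fin n) ℂ) : ℝ := ‖Matrix.toEuclideanCLM (𝕜 := ℂ) M‖

section helpers
attribute [local instance] Matrix.linftyOpNormedRing Matrix.linftyOpNormedAlgebra

theorem aux_inv_entry {n : ℕ} (E A : Matrix (Fin n) (Fin n) ℂ) (s : ℂ)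
    (h : IsUnit (Gm E A s)) (i j : Fin n) :
    HasDerivAt (fun t => (Gm E A t)⁻¹ i j)
      (-((Gm E A s)⁻¹ * E * (Gm E A s)⁻¹) i j) s := by
  obtain ⟨u, hu⟩ := h
  have hG : HasDerivAt (fun t : ℂ => Gm E A t) E s := by
    have h0 := ((hasDerivAt_id s).smul_const E).sub_const A
    rw [one_smul] at h0
    exact h0
  have h1 := hasFDerivAt_ringInverse (𝕜 := ℂ) u
  rw [hu] at h1
  have h2 := h1.comp_hasDerivAt s hG
  let L : Matrix (Fin n) (Fin n) ℂ →ₗ[ℂ] ℂ :=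
    { toFun := fun M => M i j, map_add' := fun _ _ => rfl, map_smul' := fun _ _ => rfl }
  have h3 := (LinearMap.toContinuousLinearMap L).hasFDerivAt.comp_hasDerivAt s h2
  have hui : (Gm E A s)⁻¹ = (↑u⁻¹ : Matrix (Fin n) (Fin n) ℂ) := by
    rw [Matrix.nonsing_inv_eq_ringInverse, ← hu, Ring.inverse_unit]
  rw [hui]
  refine (h3.congr_deriv ?_).congr_of_eventuallyEq ?_
  · rfl
  · refine Filter.Eventually.of_forall fun t => ?_
    change (Gm E A t)⁻¹ i j = Ring.inverse (Gm E A t) i j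
    rw [Matrix.nonsing_inv_eq_ringInverse]

end helpers

theorem aux_inv_mulVec {n : ℕ} (E A : Matrix (Fin n) (Fin n) ℂ) (s a : ℂ)
    (h : IsUnit (Gm E A (a + s))) (b : ℂ → Fin n → ℂ) (b' : Fin n → ℂ)
    (hb : HasDerivAt b b' s) :
    HasDerivAt (fun t => (Gm E A (a + t))⁻¹ *ᵥ b t)
      (-((Gm E A (a + s))⁻¹ *ᵥ (E *ᵥ ((Gm E A (a + s))⁻¹ *ᵥ b s)))
        + (Gm E A (a + s))⁻¹ *ᵥ b') s := by
  rw [hasDerivAt_pi] at hb ⊢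
  intro i
  have : HasDerivAt (fun t => ∑ j, (Gm E A (a + t))⁻¹ i j * b t j)
      (∑ j, (-((Gm E A (a + s))⁻¹ * E * (Gm E A (a + s))⁻¹) i j * b s j
        + (Gm E A (a + s))⁻¹ i j * b' j)) s := by
    refine HasDerivAt.fun_sum fun j _ => ?_
    exact ((aux_inv_entry E A (a + s) h i j).comp_const_add a s).mul (hb j)
  refine this.congr_deriv ?_
  rw [Finset.sum_add_distrib]
  simp only [Matrix.mulVec_mulVec, ← Matrix.mul_assoc, Pi.add_apply, Pi.neg_apply]
  simp [Matrix.mulVec, dotProduct]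

theorem aux_mulVec {m n : ℕ} (M : Matrix (Fin n) (Fin m) ℂ) (b : ℂ → Fin m → ℂ)
    (b' : Fin m → ℂ) (s : ℂ) (hb : HasDerivAt b b' s) :
    HasDerivAt (fun t => M *ᵥ b t) (M *ᵥ b') s := by
  rw [hasDerivAt_pi] at hb ⊢
  exact fun i => HasDerivAt.fun_sum (u := Finset.univ) fun j _ => (hb j).const_mul (M i j)

theorem aux_kron {n : ℕ} (Q : Matrix (Fin n) (Fin n × Fin n) ℂ) (u : Fin n → ℂ)
    (b : ℂ → Fin n → ℂ) (b' : Fin n → ℂ) (s : ℂ) (hb : HasDerivAt b b' s) :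
    HasDerivAt (fun t => Q *ᵥ vkron u (b t)) (Q *ᵥ vkron u b') s := by
  rw [hasDerivAt_pi] at hb ⊢
  exact fun i => HasDerivAt.fun_sum (u := Finset.univ) fun j _ =>
    ((hb j.2).const_mul (u j.1)).const_mul (Q i j)

theorem aux_mode2 {n : ℕ} (Q : Matrix (Fin n) (Fin n × Fin n) ℂ) (u v y : Fin n → ℂ) :
    y ⬝ᵥ (Q *ᵥ vkron u v) = (mode2 Q *ᵥ vkron u y) ⬝ᵥ v := by
  simp only [dotProduct, Matrix.mulVec, mode2, vkron, Fintype.sum_prod_type,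
    Finset.mul_sum, Finset.sum_mul]
  rw [Finset.sum_comm]
  conv_lhs =>
    enter [2, l]
    rw [Finset.sum_comm]
  rw [Finset.sum_comm]
  refine Finset.sum_congr rfl fun j _ => Finset.sum_congr rfl fun l _ =>
    Finset.sum_congr rfl fun i _ => ?_
  ring

theorem aux_dual {n : ℕ} (G : Matrix (Fin n) (Fin n) ℂ) (c v : Fin n → ℂ) :
    c ⬝ᵥ (G⁻¹ *ᵥ v) = ((Gᵀ)⁻¹ *ᵥ c) ⬝ᵥ v := by
  rw [← Matrix.transpose_nonsing_inv, Matrix.mulVec_transpose, Matrix.dotProduct_mulVec]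

theorem aux_deriv {n : ℕ} (E A N : Matrix (Fin n) (Fin n) ℂ)
    (Q : Matrix (Fin n) (Fin n × Fin n) ℂ) (B C : Fin n → ℂ) (σ1 σ2 : ℂ)
    (hG2 : IsUnit (Gm E A σ2)) (hG12 : IsUnit (Gm E A (σ1 + σ2))) :
    deriv (fun s => H2 E A N Q B C σ1 s) σ2 =
      -(y1 E A C (σ1 + σ2) ⬝ᵥ (E *ᵥ x2 E A N Q B σ1 σ2))
      - y2 E A N Q B C σ2 σ1 ⬝ᵥ (E *ᵥ x1 E A B σ2) := by
  have hx : HasDerivAt (fun t => x1 E A B t)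
      (-((Gm E A σ2)⁻¹ *ᵥ (E *ᵥ x1 E A B σ2))) σ2 := by
    have := aux_inv_mulVec E A σ2 0 (by simpa using hG2) (fun _ => B) 0 (hasDerivAt_const _ _)
    simpa [x1] using this
  set x' := -((Gm E A σ2)⁻¹ *ᵥ (E *ᵥ x1 E A B σ2)) with hx'
  have hB : HasDerivAt (fun t => B2 E A N Q B σ1 t)
      (Q *ᵥ vkron (x1 E A B σ1) x' + (1/2 : ℂ) • (N *ᵥ x')) σ2 :=
    (aux_kron Q _ _ _ _ hx).add
      ((aux_mulVec N _ _ _ (hx.const_add (x1 E A B σ1))).const_smul (1/2 : ℂ))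
  have hX := aux_inv_mulVec E A σ2 σ1 hG12 _ _ hB
  have hH : HasDerivAt (fun t => H2 E A N Q B C σ1 t) _ σ2 :=
    HasDerivAt.fun_sum (u := Finset.univ) fun i _ => ((hasDerivAt_pi.1 hX) i).const_mul (C i)
  rw [hH.deriv]
  change C ⬝ᵥ (_ + _) = _
  have e : y2 E A N Q B C σ2 σ1 ⬝ᵥ (E *ᵥ x1 E A B σ2)
      = - (C2 E A N Q B C σ2 σ1 ⬝ᵥ x') := by
    rw [hx', y2, dotProduct_neg, neg_neg, aux_dual]
  rw [e, dotProduct_add, dotProduct_neg, aux_dual, aux_dual]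
  change -(y1 E A C (σ1 + σ2) ⬝ᵥ (E *ᵥ x2 E A N Q B σ1 σ2)) +
    y1 E A C (σ1 + σ2) ⬝ᵥ _ = _
  rw [sub_neg_eq_add, C2, add_comm σ2 σ1, add_dotProduct, dotProduct_add, aux_mode2,
    dotProduct_smul, smul_dotProduct, Matrix.mulVec_transpose, Matrix.dotProduct_mulVec _ N]

theorem aux_solve {n r : ℕ} (G : Matrix (Fin n) (Fin n) ℂ) (V W : Matrix (Fin n) (Fin r) ℂ)
    (hG : IsUnit G) (hr : IsUnit (Wᵀ * G * V)) (b : Fin n → ℂ) (c : Fin r → ℂ)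
    (h : G⁻¹ *ᵥ b = V *ᵥ c) : (Wᵀ * G * V)⁻¹ *ᵥ (Wᵀ *ᵥ b) = c := by
  have hb : b = G *ᵥ (V *ᵥ c) := by
    rw [← h, Matrix.mulVec_mulVec,
      Matrix.mul_nonsing_inv _ ((Matrix.isUnit_iff_isUnit_det _).1 hG), Matrix.one_mulVec]
  rw [hb]
  simp only [Matrix.mulVec_mulVec]
  rw [← Matrix.mul_assoc Wᵀ,
    Matrix.nonsing_inv_mul _ ((Matrix.isUnit_iff_isUnit_det _).1 hr), Matrix.one_mulVec]

theorem aux_Gm {n r : ℕ} (E A : Matrix (Fin n) (Fin n) ℂ) (V W : Matrix (Fin n) (Fin r) ℂ)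
    (s : ℂ) : Gm (Wᵀ * E * V) (Wᵀ * A * V) s = Wᵀ * Gm E A s * V := by
  simp [Gm, Matrix.mul_sub, Matrix.sub_mul]

theorem aux_kron_red {n r : ℕ} (V : Matrix (Fin n) (Fin r) ℂ) (c d : Fin r → ℂ) :
    (V ⊗ₖ V) *ᵥ vkron c d = vkron (V *ᵥ c) (V *ᵥ d) := by
  ext ⟨i, j⟩
  simp only [Matrix.mulVec, dotProduct, vkron, Fintype.sum_prod_type, Finset.sum_mul_sum,
    Matrix.kroneckerMap_apply]
  refine Finset.sum_congr rfl fun _ _ => Finset.sum_congr rfl fun _ _ => ?_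
  ring

theorem aux_mode2_red {n r : ℕ} (Q : Matrix (Fin n) (Fin n × Fin n) ℂ)
    (V W : Matrix (Fin n) (Fin r) ℂ) (c d : Fin r → ℂ) :
    mode2 (Wᵀ * Q * (V ⊗ₖ V)) *ᵥ vkron c d
      = Vᵀ *ᵥ (mode2 Q *ᵥ vkron (V *ᵥ c) (W *ᵥ d)) := by
  refine dotProduct_eq _ _ fun v => ?_
  rw [← aux_mode2, Matrix.mulVec_transpose V, ← Matrix.dotProduct_mulVec, ← aux_mode2,
    ← Matrix.mulVec_mulVec, aux_kron_red, ← Matrix.mulVec_mulVec, Matrix.dotProduct_mulVec,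
    Matrix.vecMul_transpose]

theorem reduced_H2_second_partial_matching {n r : ℕ}
    (E A N : Matrix (Fin n) (Fin n) ℂ) (Q : Matrix (Fin n) (Fin n × Fin n) ℂ)
    (B C : Fin n → ℂ) (V W : Matrix (Fin n) (Fin r) ℂ) (σ1 σ2 : ℂ)
    (hQ : QSymm Q)
    (hG1 : IsUnit (Gm E A σ1)) (hG2 : IsUnit (Gm E A σ2))
    (hG12 : IsUnit (Gm E A (σ1 + σ2)))
    (hGr1 : IsUnit (Wᵀ * Gm E A σ1 * V)) (hGr2 : IsUnit (Wᵀ * Gm E A σ2 * V))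
    (hGr12 : IsUnit (Wᵀ * Gm E A (σ1 + σ2) * V))
    (hx1 : ∃ c : Fin r → ℂ, x1 E A B σ1 = V *ᵥ c)
    (hx2 : ∃ c : Fin r → ℂ, x1 E A B σ2 = V *ᵥ c)
    (hx12 : ∃ c : Fin r → ℂ, x2 E A N Q B σ1 σ2 = V *ᵥ c)
    (hy1 : ∃ d : Fin r → ℂ, y1 E A C (σ1 + σ2) = W *ᵥ d)
    (hy2 : ∃ d : Fin r → ℂ, y2 E A N Q B C σ2 σ1 = W *ᵥ d) :
    deriv (fun s => H2 E A N Q B C σ1 s) σ2 =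
      deriv (fun s => H2 (Wᵀ * E * V) (Wᵀ * A * V) (Wᵀ * N * V) (Wᵀ * Q * (V ⊗ₖ V))
        (Wᵀ *ᵥ B) (Vᵀ *ᵥ C) σ1 s) σ2 := by
  obtain ⟨c1, hc1⟩ := hx1
  obtain ⟨c2, hc2⟩ := hx2
  obtain ⟨c12, hc12⟩ := hx12
  obtain ⟨d1, hd1⟩ := hy1
  obtain ⟨d2, hd2⟩ := hy2
  have tr : ∀ s, (Wᵀ * Gm E A s * V)ᵀ = Vᵀ * (Gm E A s)ᵀ * W := fun s => by
    simp [Matrix.transpose_mul, Matrix.mul_assoc]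
  have ut : ∀ {m : ℕ} {M : Matrix (Fin m) (Fin m) ℂ}, IsUnit M → IsUnit Mᵀ := fun h =>
    (Matrix.isUnit_transpose _).2 h
  have r1 : x1 (Wᵀ * E * V) (Wᵀ * A * V) (Wᵀ *ᵥ B) σ1 = c1 := by
    rw [x1, aux_Gm]; exact aux_solve _ V W hG1 hGr1 _ _ hc1
  have r2 : x1 (Wᵀ * E * V) (Wᵀ * A * V) (Wᵀ *ᵥ B) σ2 = c2 := by
    rw [x1, aux_Gm]; exact aux_solve _ V W hG2 hGr2 _ _ hc2
  have r12 : x2 (Wᵀ * E * V) (Wᵀ * A * V) (Wᵀ * N * V) (Wᵀ * Q * (V ⊗ₖ V))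
      (Wᵀ *ᵥ B) σ1 σ2 = c12 := by
    rw [← aux_solve _ V W hG12 hGr12 _ _ hc12, x2, aux_Gm, B2, B2, r1, r2, hc1, hc2,
      ← Matrix.mulVec_mulVec, aux_kron_red, Matrix.mulVec_add Wᵀ, Matrix.mulVec_smul,
      ← Matrix.mulVec_add V]
    simp only [Matrix.mulVec_mulVec, Matrix.mul_assoc]
  have s1 : y1 (Wᵀ * E * V) (Wᵀ * A * V) (Vᵀ *ᵥ C) (σ1 + σ2) = d1 := by
    rw [y1, aux_Gm, tr]
    exact aux_solve _ W V (ut hG12) (tr _ ▸ ut hGr12) _ _ hd1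
  have s2 : y2 (Wᵀ * E * V) (Wᵀ * A * V) (Wᵀ * N * V) (Wᵀ * Q * (V ⊗ₖ V))
      (Wᵀ *ᵥ B) (Vᵀ *ᵥ C) σ2 σ1 = d2 := by
    rw [← aux_solve _ W V (ut hG2) (tr _ ▸ ut hGr2) _ _ hd2, y2, aux_Gm, tr, C2, C2,
      add_comm σ2 σ1, s1, r1, hc1, hd1, aux_mode2_red, Matrix.mulVec_add Vᵀ,
      Matrix.mulVec_smul]
    simp only [Matrix.mulVec_mulVec, Matrix.mul_assoc, Matrix.transpose_mul,
      Matrix.transpose_transpose]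
  have key : ∀ (d c : Fin r → ℂ), (W *ᵥ d) ⬝ᵥ (E *ᵥ (V *ᵥ c)) = d ⬝ᵥ ((Wᵀ * E * V) *ᵥ c) := by
    intro d c
    rw [← Matrix.mulVec_mulVec, ← Matrix.mulVec_mulVec, Matrix.dotProduct_mulVec d,
      Matrix.vecMul_transpose]
  rw [aux_deriv E A N Q B C σ1 σ2 hG2 hG12,
    aux_deriv _ _ _ _ _ _ σ1 σ2 (by rw [aux_Gm]; exact hGr2) (by rw [aux_Gm]; exact hGr12),
    r2, r12, s1, s2, hc2, hc12, hd1, hd2, key, key]
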